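/- arXiv:1410.3253 — 3 statements merged into one kernel-verified Lean document; each statement's English description precedes it below -/
import Mathlib

section
/- Let X be a real Hilbert space, B : X × X → ℝ a bilinear form that is coercive with constant α > 0, i.e. B(v, v) ≥ α‖v‖² for all v ∈ X. Let W be a closed subspace of X, V a closed subspace of W, and F : X → ℝ a continuous linear functional. Suppose Q ∈ W satisfies B(Q, w) = F(w) for all w ∈ W, Q_RB ∈ V satisfies B(Q_RB, v) = F(v) for all v ∈ V, and r ∈ W satisfies ⟨r, w⟩ = B(Q_RB, w) − F(w) for all w ∈ W. Then the energy norm of the reduced-basis error is controlled by the residual: B(Q − Q_RB, Q − Q_RB)^{1/2} ≤ α^{−1/2} ‖r‖. -/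
open scoped RealInnerProductSpace

/-! The error `e = Q - Q_RB` lies in `W`, so the residual may be tested on it: `B(e, e) = -⟪r, e⟫`.
Coercivity and Cauchy–Schwarz then sandwich the energy, `α ‖e‖² ≤ B(e, e) ≤ ‖r‖ ‖e‖`, and
eliminating `‖e‖` leaves `α B(e, e) ≤ ‖r‖²`. -/

theorem mul_le_sq_of_mul_sq_le_of_le_mul {R : Type*} [CommRing R] [LinearOrder R]
    [IsStrictOrderedRing R] {a b c t : R} (ha : 0 ≤ a)
    (hlower : a * t ^ 2 ≤ b) (hupper : b ≤ c * t) : a * b ≤ c ^ 2 := by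
  have hlower' : (a * t) ^ 2 ≤ a * b := by
    calc (a * t) ^ 2 = a * (a * t ^ 2) := by ring
      _ ≤ a * b := by gcongr
  have hupper' : a * b ≤ c * (a * t) := by
    calc a * b ≤ a * (c * t) := by gcongr
      _ = c * (a * t) := by ring
  calc a * b = 2 * (a * b) - a * b := by ring
    _ ≤ 2 * (c * (a * t)) - (a * t) ^ 2 := by gcongr
    _ = c ^ 2 - (c - a * t) ^ 2 := by ring
    _ ≤ c ^ 2 := sub_le_self _ (sq_nonneg _)

theorem sqrt_le_inv_sqrt_mul_of_mul_le_sq {a b c : ℝ} (ha : 0 < a) (hc : 0 ≤ c)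
    (h : a * b ≤ c ^ 2) : √b ≤ (√a)⁻¹ * c := by
  rw [le_inv_mul_iff₀ (Real.sqrt_pos.mpr ha), ← Real.sqrt_mul ha.le]
  exact Real.sqrt_le_iff.mpr ⟨hc, h⟩

section Residual

variable {X : Type*} [SeminormedAddCommGroup X] [InnerProductSpace ℝ X]

theorem apply_sub_eq_neg_inner_residual {B : X →ₗ[ℝ] X →ₗ[ℝ] ℝ} {f : ℝ} {u u' r w : X}
    (hu : B u w = f) (hr : ⟪r, w⟫ = B u' w - f) : B (u - u') w = -⟪r, w⟫ := by
  rw [hr, ← hu, map_sub, LinearMap.sub_apply, neg_sub]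

theorem stmt_1_general (B : X →ₗ[ℝ] X →ₗ[ℝ] ℝ) {α : ℝ} (hα : 0 < α) (W : Submodule ℝ X)
    (hcoer : ∀ v ∈ W, α * ‖v‖ ^ 2 ≤ B v v) (F : X →ₗ[ℝ] ℝ) {u u' r : X} (huu' : u - u' ∈ W)
    (hu : ∀ w ∈ W, B u w = F w) (hr : ∀ w ∈ W, ⟪r, w⟫ = B u' w - F w) :
    √(B (u - u') (u - u')) ≤ (√α)⁻¹ * ‖r‖ := by
  have henergy : B (u - u') (u - u') ≤ ‖r‖ * ‖u - u'‖ := by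
    calc B (u - u') (u - u') = -⟪r, u - u'⟫ :=
          apply_sub_eq_neg_inner_residual (hu _ huu') (hr _ huu')
      _ ≤ |⟪r, u - u'⟫| := neg_le_abs _
      _ ≤ ‖r‖ * ‖u - u'‖ := abs_real_inner_le_norm r (u - u')
  exact sqrt_le_inv_sqrt_mul_of_mul_le_sq hα (norm_nonneg r)
    (mul_le_sq_of_mul_sq_le_of_le_mul hα.le (hcoer _ huu') henergy)

end Residual

/-- The energy norm of the reduced-basis error is controlled by the norm of the Riesz
representative of the residual: `B(Q - Q_RB, Q - Q_RB)^{1/2} ≤ α^{-1/2} ‖r‖`. -/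
theorem stmt_1
    {X : Type*} [NormedAddCommGroup X] [InnerProductSpace ℝ X] [CompleteSpace X]
    (B : X →ₗ[ℝ] X →ₗ[ℝ] ℝ)
    (α : ℝ) (hα : 0 < α) (hcoer : ∀ v : X, α * ‖v‖ ^ 2 ≤ B v v)
    (W V : Submodule ℝ X)
    (hWclosed : IsClosed (W : Set X)) (hVclosed : IsClosed (V : Set X))
    (hVW : V ≤ W)
    (F : X →L[ℝ] ℝ)
    (Q : X) (hQW : Q ∈ W) (hQ : ∀ w ∈ W, B Q w = F w)
    (QRB : X) (hQRBV : QRB ∈ V) (hQRB : ∀ v ∈ V, B QRB v = F v)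
    (r : X) (hrW : r ∈ W) (hr : ∀ w ∈ W, ⟪r, w⟫ = B QRB w - F w) :
    Real.sqrt (B (Q - QRB) (Q - QRB)) ≤ (Real.sqrt α)⁻¹ * ‖r‖ := by
  exact stmt_1_general B hα W (fun v _ => hcoer v) F (W.sub_mem hQW (hVW hQRBV)) hQ hr
end

section
/- Let X be a real Hilbert space, B : X × X → ℝ a bilinear form that is coercive with constant α > 0 (B(v,v) ≥ α‖v‖² for all v ∈ X) and bounded with constant β (|B(v,w)| ≤ β‖v‖‖w‖ for all v, w ∈ X). Let W be a closed subspace of X, V a closed subspace of W, and F : X → ℝ a continuous linear functional. Suppose Q ∈ W satisfies B(Q, w) = F(w) for all w ∈ W, Q_RB ∈ V satisfies B(Q_RB, v) = F(v) for all v ∈ V, and r ∈ W satisfies ⟨r, w⟩ = B(Q_RB, w) − F(w) for all w ∈ W. Then the residual-based error indicator Δ := α^{−1}‖r‖ is both reliable and efficient: ‖Q − Q_RB‖ ≤ α^{−1}‖r‖ and α^{−1}‖r‖ ≤ (β/α)‖Q − Q_RB‖. -/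
open scoped RealInnerProductSpace

/-!
Let `Q` solve the equation on `W`, and let `u ∈ W` be an approximation of `Q` with residual `r`.
Subtracting the equation for `Q` from the definition of the residual shows that on `W` the vector
`r` represents the functional `B (u - Q)`. Testing with the error `u - Q`, which lies in `W`, and
using coercivity gives reliability; testing with `r` itself and using boundedness gives efficiency.
-/

theorem mul_nonneg_of_mul_mul_self_nonneg {R : Type*} [Semiring R] [LinearOrder R]
    [IsStrictOrderedRing R] {c x : R} (hx : 0 ≤ x) (h : 0 ≤ c * x * x) : 0 ≤ c * x := by
  rcases hx.eq_or_lt with rfl | hx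
  · rw [mul_zero]
  · exact nonneg_of_mul_nonneg_left h hx

section Residual

open scoped InnerProductSpace

variable {𝕜 E : Type*} [RCLike 𝕜] [SeminormedAddCommGroup E] [InnerProductSpace 𝕜 E]

theorem mul_norm_le_norm_of_mul_norm_sq_le_norm_inner {a : ℝ} {e r : E}
    (h : a * ‖e‖ ^ 2 ≤ ‖⟪r, e⟫_𝕜‖) : a * ‖e‖ ≤ ‖r‖ := by
  rcases (norm_nonneg e).eq_or_lt with he | he
  · simp [← he]
  · refine le_of_mul_le_mul_right ?_ he
    calc
      a * ‖e‖ * ‖e‖ = a * ‖e‖ ^ 2 := by ring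
      _ ≤ ‖⟪r, e⟫_𝕜‖ := h
      _ ≤ ‖r‖ * ‖e‖ := norm_inner_le_norm r e

theorem norm_le_of_norm_inner_self_le_mul_norm {c : ℝ} {r : E} (hc : 0 ≤ c)
    (h : ‖⟪r, r⟫_𝕜‖ ≤ c * ‖r‖) : ‖r‖ ≤ c := by
  rcases (norm_nonneg r).eq_or_lt with hr | hr
  · rwa [← hr]
  · refine le_of_mul_le_mul_right ?_ hr
    rwa [inner_self_eq_norm_sq_to_K, norm_pow, RCLike.norm_ofReal, abs_norm, sq] at h

variable {σ : 𝕜 →+* 𝕜} {B : E →ₛₗ[σ] E →ₗ[𝕜] 𝕜} {W : Submodule 𝕜 E} {F : E → 𝕜} {Q u r : E}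

theorem inner_residual_eq_apply_sub (hQ : ∀ w ∈ W, B Q w = F w)
    (hr : ∀ w ∈ W, ⟪r, w⟫_𝕜 = B u w - F w) {w : E} (hw : w ∈ W) :
    ⟪r, w⟫_𝕜 = B (u - Q) w := by
  rw [hr w hw, ← hQ w hw, map_sub, LinearMap.sub_apply]

theorem mul_norm_sub_le_norm_residual {α : ℝ} (hcoer : ∀ v ∈ W, α * ‖v‖ ^ 2 ≤ ‖B v v‖)
    (hQW : Q ∈ W) (hQ : ∀ w ∈ W, B Q w = F w)
    (huW : u ∈ W) (hr : ∀ w ∈ W, ⟪r, w⟫_𝕜 = B u w - F w) :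
    α * ‖u - Q‖ ≤ ‖r‖ := by
  have herr : u - Q ∈ W := W.sub_mem huW hQW
  apply mul_norm_le_norm_of_mul_norm_sq_le_norm_inner (𝕜 := 𝕜)
  rw [inner_residual_eq_apply_sub hQ hr herr]
  exact hcoer _ herr

theorem norm_residual_le_mul_norm_sub {β : ℝ}
    (hbdd : ∀ v ∈ W, ∀ w ∈ W, ‖B v w‖ ≤ β * ‖v‖ * ‖w‖)
    (hQW : Q ∈ W) (hQ : ∀ w ∈ W, B Q w = F w)
    (huW : u ∈ W) (hrW : r ∈ W) (hr : ∀ w ∈ W, ⟪r, w⟫_𝕜 = B u w - F w) :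
    ‖r‖ ≤ β * ‖u - Q‖ := by
  have herr : u - Q ∈ W := W.sub_mem huW hQW
  apply norm_le_of_norm_inner_self_le_mul_norm (𝕜 := 𝕜)
  · exact mul_nonneg_of_mul_mul_self_nonneg (norm_nonneg _)
      ((norm_nonneg _).trans (hbdd _ herr _ herr))
  · rw [inner_residual_eq_apply_sub hQ hr hrW]
    exact hbdd _ herr _ hrW

/-- A general `σ` covers bilinear (`σ = id`) and sesquilinear (`σ = conj`) forms at once. -/
theorem stmt_2_general {α β : ℝ} (hα : 0 < α)
    (hcoer : ∀ v ∈ W, α * ‖v‖ ^ 2 ≤ ‖B v v‖)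
    (hbdd : ∀ v ∈ W, ∀ w ∈ W, ‖B v w‖ ≤ β * ‖v‖ * ‖w‖)
    (hQW : Q ∈ W) (hQ : ∀ w ∈ W, B Q w = F w)
    (huW : u ∈ W) (hrW : r ∈ W) (hr : ∀ w ∈ W, ⟪r, w⟫_𝕜 = B u w - F w) :
    ‖Q - u‖ ≤ α⁻¹ * ‖r‖ ∧ α⁻¹ * ‖r‖ ≤ (β / α) * ‖Q - u‖ := by
  rw [norm_sub_rev Q u, le_inv_mul_iff₀ hα, inv_mul_eq_div, div_mul_eq_mul_div]
  exact ⟨mul_norm_sub_le_norm_residual hcoer hQW hQ huW hr,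
    div_le_div_of_nonneg_right (norm_residual_le_mul_norm_sub hbdd hQW hQ huW hrW hr) hα.le⟩

end Residual

/-- Reliability and efficiency of the residual-based error indicator `Δ := α⁻¹ ‖r‖`:
`‖Q − Q_RB‖ ≤ α⁻¹‖r‖` and `α⁻¹‖r‖ ≤ (β/α)‖Q − Q_RB‖`. -/
theorem stmt_2
    {X : Type*} [NormedAddCommGroup X] [InnerProductSpace ℝ X] [CompleteSpace X]
    (B : X →ₗ[ℝ] X →ₗ[ℝ] ℝ)
    (α : ℝ) (hα : 0 < α) (hcoer : ∀ v : X, α * ‖v‖ ^ 2 ≤ B v v)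
    (β : ℝ) (hbdd : ∀ v w : X, |B v w| ≤ β * ‖v‖ * ‖w‖)
    (W V : Submodule ℝ X)
    (hWclosed : IsClosed (W : Set X)) (hVclosed : IsClosed (V : Set X))
    (hVW : V ≤ W)
    (F : X →L[ℝ] ℝ)
    (Q : X) (hQW : Q ∈ W) (hQ : ∀ w ∈ W, B Q w = F w)
    (QRB : X) (hQRBV : QRB ∈ V) (hQRB : ∀ v ∈ V, B QRB v = F v)
    (r : X) (hrW : r ∈ W) (hr : ∀ w ∈ W, ⟪r, w⟫ = B QRB w - F w) :
    ‖Q - QRB‖ ≤ α⁻¹ * ‖r‖ ∧ α⁻¹ * ‖r‖ ≤ (β / α) * ‖Q - QRB‖ :=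
  stmt_2_general hα (fun v _ ↦ (hcoer v).trans (le_abs_self _)) (fun v _ w _ ↦ hbdd v w)
    hQW hQ (hVW hQRBV) hrW hr
end

section
/- Let H be a real Hilbert space and F ⊆ H a nonempty compact set. Let (f_m)_{m ≥ 0} be a sequence in F, set V_n := span{f_0, …, f_{n−1}} (with V_0 = {0}), and define σ_n(F) := sup_{f ∈ F} dist(f, V_n). Define the Kolmogorov n-width d_n(F) := inf { sup_{f ∈ F} dist(f, Y) : Y is a subspace of H with dim Y ≤ n }. Suppose the sequence is weak greedy with parameter γ ∈ (0, 1], i.e. dist(f_n, V_n) ≥ γ · σ_n(F) for every n ≥ 0. Then for every n ≥ 0, σ_n(F) ≤ (1 + γ^{−1})^{n+1} (n + 1) d_n(F). -/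
/-- The space spanned by the first `n` greedily selected elements. -/
noncomputable def greedySpace {H : Type*} [NormedAddCommGroup H] [InnerProductSpace ℝ H]
    (f : ℕ → H) (n : ℕ) : Submodule ℝ H :=
  Submodule.span ℝ (f '' Set.Iio n)

/-- The worst-case error `σ_n(F)` of the `n`-th greedy space. -/
noncomputable def greedyError {H : Type*} [NormedAddCommGroup H] [InnerProductSpace ℝ H]
    (F : Set H) (f : ℕ → H) (n : ℕ) : ℝ :=
  ⨆ g : F, Metric.infDist (g : H) (greedySpace f n : Set H)

/-- The Kolmogorov `n`-width `d_n(F)` of a set `F` in `H`. -/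
noncomputable def kolmogorovWidth {H : Type*} [NormedAddCommGroup H] [InnerProductSpace ℝ H]
    (F : Set H) (n : ℕ) : ℝ :=
  sInf { r : ℝ | ∃ Y : Submodule ℝ H, FiniteDimensional ℝ Y ∧ Module.finrank ℝ Y ≤ n ∧
    r = ⨆ g : F, Metric.infDist (g : H) (Y : Set H) }

/-!
Let `g i` be the Gram–Schmidt residual of `f i` and let `Y` have dimension at most `n`. The `n + 1`
vectors `g 0, …, g n` admit a nontrivial combination `u = ∑ c i • g i` orthogonal to `Y`. Then
`|⟪f i, u⟫| ≤ dist (f i, Y) * ‖u‖` for each `i`, and these inner products are a triangular system in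
the unknowns `c i * ‖g i‖ ^ 2`, whose off-diagonal entries are at most `γ⁻¹` by the greedy choice.
Forward substitution loses a factor `1 + γ⁻¹` per step, and summing over `i` cancels `‖u‖`.
-/

open Finset Metric
open scoped InnerProductSpace

theorem le_mul_one_add_pow_of_le_add_mul_sum {R : Type*} [CommRing R] [PartialOrder R]
    [IsOrderedRing R] {X : ℕ → R} {C D : R} {n : ℕ} (hC : 0 ≤ C)
    (hX : ∀ i ≤ n, X i ≤ D + C * ∑ j ∈ range i, X j) {i : ℕ} (hi : i ≤ n) :
    X i ≤ D * (1 + C) ^ i := by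
  induction i using Nat.strong_induction_on with
  | _ i ih =>
    have hgeom : (∑ j ∈ range i, (1 + C) ^ j) * C = (1 + C) ^ i - 1 := by
      simpa only [add_sub_cancel_left] using geom_sum_mul (1 + C) i
    calc X i ≤ D + C * ∑ j ∈ range i, X j := hX i hi
      _ ≤ D + C * ∑ j ∈ range i, D * (1 + C) ^ j := by
        gcongr with j hj
        have hji := mem_range.1 hj
        exact ih j hji (hji.le.trans hi)
      _ = D * (1 + C) ^ i := by
        rw [← mul_sum]
        linear_combination D * hgeom

theorem bddAbove_range_infDist {α : Type*} [PseudoMetricSpace α] {s t : Set α}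
    (hs : Bornology.IsBounded s) (ht : t.Nonempty) :
    BddAbove (Set.range fun x : s => infDist (x : α) t) := by
  obtain ⟨y, hy⟩ := ht
  obtain ⟨r, hr⟩ := hs.subset_closedBall y
  refine ⟨r, ?_⟩
  rintro _ ⟨x, rfl⟩
  exact (infDist_le_dist_of_mem hy).trans (hr x.2)

section InnerProduct

variable {𝕜 E : Type*} [RCLike 𝕜] [NormedAddCommGroup E] [InnerProductSpace 𝕜 E]

theorem norm_inner_le_infDist_mul_norm_of_mem_orthogonal {K : Submodule 𝕜 E} {u : E}
    (hu : u ∈ Kᗮ) (x : E) : ‖⟪x, u⟫_𝕜‖ ≤ infDist x (K : Set E) * ‖u‖ := by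
  obtain rfl | hu0 := eq_or_ne u 0
  · simp
  rw [← div_le_iff₀ (norm_pos_iff.2 hu0), le_infDist ⟨0, K.zero_mem⟩]
  intro y hy
  rw [div_le_iff₀ (norm_pos_iff.2 hu0), dist_eq_norm]
  have hxy : ⟪x, u⟫_𝕜 = ⟪x - y, u⟫_𝕜 := by
    rw [inner_sub_left, Submodule.inner_right_of_mem_orthogonal hy hu, sub_zero]
  exact hxy ▸ norm_inner_le_norm (x - y) u

theorem exists_sum_smul_mem_orthogonal_of_finrank_lt_card {ι : Type*} (K : Submodule 𝕜 E)
    [FiniteDimensional 𝕜 K] {s : Finset ι} (hs : Module.finrank 𝕜 K < #s) (v : ι → E) :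
    ∃ c : ι → 𝕜, ∑ i ∈ s, c i • v i ∈ Kᗮ ∧ ∃ i ∈ s, c i ≠ 0 := by
  have hdep : ¬ LinearIndepOn 𝕜 (fun i => K.orthogonalProjectionOnto (v i)) (s : Set ι) := by
    intro hind
    have hcard := LinearIndependent.fintype_card_le_finrank hind
    simp only [SetLike.coe_sort_coe, Fintype.card_coe] at hcard
    exact hs.not_ge hcard
  obtain ⟨c, hsum, hc⟩ := not_linearIndepOn_finset_iff.1 hdep
  refine ⟨c, ?_, hc⟩
  simpa only [← K.orthogonalProjectionOnto_eq_zero_iff, map_sum, map_smul] using hsum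

section GramSchmidt

open InnerProductSpace

variable {ι : Type*} [LinearOrder ι] [LocallyFiniteOrderBot ι] [WellFoundedLT ι]

theorem gramSchmidt_mem_orthogonal_span_image_Iio (f : ι → E) (i : ι) :
    gramSchmidt 𝕜 f i ∈ (Submodule.span 𝕜 (f '' Set.Iio i))ᗮ := by
  rw [← Submodule.span_singleton_le_iff_mem, ← Submodule.isOrtho_iff_le, Submodule.isOrtho_span]
  rintro _ rfl _ ⟨j, hj, rfl⟩
  exact gramSchmidt_inv_triangular 𝕜 f hj

theorem sub_gramSchmidt_mem_span_image_Iio (f : ι → E) (i : ι) :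
    f i - gramSchmidt 𝕜 f i ∈ Submodule.span 𝕜 (f '' Set.Iio i) := by
  rw [gramSchmidt_def, sub_sub_cancel, ← span_gramSchmidt_Iio]
  refine Submodule.sum_mem _ fun j hj => ?_
  rw [Submodule.starProjection_singleton]
  exact Submodule.smul_mem _ _ (Submodule.subset_span ⟨j, mem_Iio.1 hj, rfl⟩)

theorem inner_apply_gramSchmidt_self (f : ι → E) (i : ι) :
    ⟪f i, gramSchmidt 𝕜 f i⟫_𝕜 = (‖gramSchmidt 𝕜 f i‖ : 𝕜) ^ 2 := by
  rw [← inner_self_eq_norm_sq_to_K, ← sub_eq_zero, ← inner_sub_left]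
  exact Submodule.inner_right_of_mem_orthogonal (sub_gramSchmidt_mem_span_image_Iio f i)
    (gramSchmidt_mem_orthogonal_span_image_Iio f i)

theorem norm_inner_gramSchmidt_le_infDist_mul_norm (f : ι → E) (i : ι) (x : E) :
    ‖⟪x, gramSchmidt 𝕜 f i⟫_𝕜‖ ≤
      infDist x (Submodule.span 𝕜 (f '' Set.Iio i) : Set E) * ‖gramSchmidt 𝕜 f i‖ :=
  norm_inner_le_infDist_mul_norm_of_mem_orthogonal
    (gramSchmidt_mem_orthogonal_span_image_Iio f i) x

theorem infDist_span_image_Iio_eq_norm_gramSchmidt (f : ι → E) (i : ι) :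
    infDist (f i) (Submodule.span 𝕜 (f '' Set.Iio i) : Set E) = ‖gramSchmidt 𝕜 f i‖ := by
  apply le_antisymm
  · simpa [dist_eq_norm] using infDist_le_dist_of_mem (x := f i)
      (sub_gramSchmidt_mem_span_image_Iio (𝕜 := 𝕜) f i)
  obtain hg | hg := (norm_nonneg (gramSchmidt 𝕜 f i)).eq_or_lt
  · exact hg ▸ infDist_nonneg
  refine le_of_mul_le_mul_right ?_ hg
  simpa [inner_apply_gramSchmidt_self, sq] using
    norm_inner_gramSchmidt_le_infDist_mul_norm (𝕜 := 𝕜) f i (f i)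

theorem inner_sum_smul_gramSchmidt (f : ℕ → E) (c : ℕ → 𝕜) {i n : ℕ} (hi : i < n) :
    ⟪f i, ∑ j ∈ range n, c j • gramSchmidt 𝕜 f j⟫_𝕜 =
      ∑ j ∈ range i, c j * ⟪f i, gramSchmidt 𝕜 f j⟫_𝕜 + c i * (‖gramSchmidt 𝕜 f i‖ : 𝕜) ^ 2 := by
  rw [← inner_apply_gramSchmidt_self, ← sum_range_succ (fun j => c j * ⟪f i, gramSchmidt 𝕜 f j⟫_𝕜),
    inner_sum]
  simp only [inner_smul_right]
  refine (sum_subset (range_mono hi) fun j _ hj => ?_).symm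
  have hij : i < j := by simpa only [mem_range, not_lt, Nat.succ_le_iff] using hj
  rw [inner_eq_zero_symm.1 (gramSchmidt_inv_triangular 𝕜 f hij), mul_zero]

section Pivoted

variable {f : ℕ → E} {n : ℕ} {C d : ℝ} {Y : Submodule 𝕜 E}

theorem norm_mul_sq_norm_gramSchmidt_le_of_sum_mem_orthogonal (hC : 0 ≤ C)
    (hY : ∀ i ≤ n, infDist (f i) (Y : Set E) ≤ d)
    (hpivot : ∀ i ≤ n, ∀ j < i, infDist (f i) (Submodule.span 𝕜 (f '' Set.Iio j) : Set E) ≤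
      C * infDist (f j) (Submodule.span 𝕜 (f '' Set.Iio j) : Set E))
    {c : ℕ → 𝕜} (hc : ∑ j ∈ range (n + 1), c j • gramSchmidt 𝕜 f j ∈ Yᗮ) {i : ℕ} (hi : i ≤ n) :
    ‖c i‖ * ‖gramSchmidt 𝕜 f i‖ ^ 2 ≤
      d * ‖∑ j ∈ range (n + 1), c j • gramSchmidt 𝕜 f j‖ * (1 + C) ^ i := by
  set u := ∑ j ∈ range (n + 1), c j • gramSchmidt 𝕜 f j with hu
  refine le_mul_one_add_pow_of_le_add_mul_sum hC (X := fun j => ‖c j‖ * ‖gramSchmidt 𝕜 f j‖ ^ 2)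
    (fun i hi => ?_) hi
  have hdiag : c i * (‖gramSchmidt 𝕜 f i‖ : 𝕜) ^ 2 =
      ⟪f i, u⟫_𝕜 - ∑ j ∈ range i, c j * ⟪f i, gramSchmidt 𝕜 f j⟫_𝕜 := by
    rw [hu, inner_sum_smul_gramSchmidt f c (Nat.lt_succ_of_le hi), add_sub_cancel_left]
  have hrhs : ‖⟪f i, u⟫_𝕜‖ ≤ d * ‖u‖ :=
    (norm_inner_le_infDist_mul_norm_of_mem_orthogonal hc (f i)).trans (by gcongr; exact hY i hi)
  have hoffdiag : ∀ j < i, ‖⟪f i, gramSchmidt 𝕜 f j⟫_𝕜‖ ≤ C * ‖gramSchmidt 𝕜 f j‖ ^ 2 := by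
    intro j hj
    have hpiv := hpivot i hi j hj
    rw [infDist_span_image_Iio_eq_norm_gramSchmidt] at hpiv
    calc ‖⟪f i, gramSchmidt 𝕜 f j⟫_𝕜‖
        ≤ infDist (f i) (Submodule.span 𝕜 (f '' Set.Iio j) : Set E) * ‖gramSchmidt 𝕜 f j‖ :=
          norm_inner_gramSchmidt_le_infDist_mul_norm f j (f i)
      _ ≤ C * ‖gramSchmidt 𝕜 f j‖ * ‖gramSchmidt 𝕜 f j‖ := by gcongr
      _ = C * ‖gramSchmidt 𝕜 f j‖ ^ 2 := by ring
  calc ‖c i‖ * ‖gramSchmidt 𝕜 f i‖ ^ 2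
      = ‖⟪f i, u⟫_𝕜 - ∑ j ∈ range i, c j * ⟪f i, gramSchmidt 𝕜 f j⟫_𝕜‖ := by
        rw [← hdiag, norm_mul, norm_pow, RCLike.norm_ofReal, abs_norm]
    _ ≤ ‖⟪f i, u⟫_𝕜‖ + ∑ j ∈ range i, ‖c j * ⟪f i, gramSchmidt 𝕜 f j⟫_𝕜‖ :=
        (norm_sub_le _ _).trans (by gcongr; exact norm_sum_le _ _)
    _ ≤ d * ‖u‖ + ∑ j ∈ range i, C * (‖c j‖ * ‖gramSchmidt 𝕜 f j‖ ^ 2) := by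
        gcongr with j hj
        rw [norm_mul, mul_left_comm]
        gcongr
        exact hoffdiag j (mem_range.1 hj)
    _ = d * ‖u‖ + C * ∑ j ∈ range i, ‖c j‖ * ‖gramSchmidt 𝕜 f j‖ ^ 2 := by rw [mul_sum]

theorem le_mul_geom_sum_of_le_infDist_span_image_Iio [FiniteDimensional 𝕜 Y] {s : ℝ} (hC : 0 ≤ C)
    (hYn : Module.finrank 𝕜 Y ≤ n) (hY : ∀ i ≤ n, infDist (f i) (Y : Set E) ≤ d)
    (hpivot : ∀ i ≤ n, ∀ j < i, infDist (f i) (Submodule.span 𝕜 (f '' Set.Iio j) : Set E) ≤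
      C * infDist (f j) (Submodule.span 𝕜 (f '' Set.Iio j) : Set E))
    (hs : ∀ i ≤ n, s ≤ infDist (f i) (Submodule.span 𝕜 (f '' Set.Iio i) : Set E)) :
    s ≤ d * ∑ i ∈ range (n + 1), (1 + C) ^ i := by
  have hd : 0 ≤ d := infDist_nonneg.trans (hY 0 n.zero_le)
  obtain hs0 | hs0 := le_or_gt s 0
  · exact hs0.trans (by positivity)
  simp only [infDist_span_image_Iio_eq_norm_gramSchmidt] at hs
  obtain ⟨c, hc, i₀, hi₀, hci₀⟩ := exists_sum_smul_mem_orthogonal_of_finrank_lt_card Y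
    (s := range (n + 1)) (by simpa [Nat.lt_succ_iff] using hYn) (gramSchmidt 𝕜 f)
  set u := ∑ j ∈ range (n + 1), c j • gramSchmidt 𝕜 f j
  have hle {i : ℕ} (hi : i ∈ range (n + 1)) : i ≤ n := Nat.le_of_lt_succ (mem_range.1 hi)
  set T := ∑ i ∈ range (n + 1), ‖c i‖ * ‖gramSchmidt 𝕜 f i‖
  have hT : 0 < T := sum_pos' (fun i _ => by positivity)
    ⟨i₀, hi₀, mul_pos (norm_pos_iff.2 hci₀) (hs0.trans_le (hs i₀ (hle hi₀)))⟩
  have huT : ‖u‖ ≤ T := (norm_sum_le _ _).trans_eq (by simp only [norm_smul, T])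
  refine le_of_mul_le_mul_right ?_ hT
  calc s * T ≤ ∑ i ∈ range (n + 1), ‖c i‖ * ‖gramSchmidt 𝕜 f i‖ ^ 2 := by
        rw [mul_sum]
        refine sum_le_sum fun i hi => ?_
        rw [mul_left_comm, sq]
        gcongr
        exact hs i (hle hi)
    _ ≤ ∑ i ∈ range (n + 1), d * ‖u‖ * (1 + C) ^ i := sum_le_sum fun i hi =>
        norm_mul_sq_norm_gramSchmidt_le_of_sum_mem_orthogonal hC hY hpivot hc (hle hi)
    _ = d * (∑ i ∈ range (n + 1), (1 + C) ^ i) * ‖u‖ := by rw [← mul_sum]; ring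
    _ ≤ d * (∑ i ∈ range (n + 1), (1 + C) ^ i) * T := by gcongr

end Pivoted

end GramSchmidt

end InnerProduct

section Greedy

variable {H : Type*} [NormedAddCommGroup H] [InnerProductSpace ℝ H] {F : Set H} {f : ℕ → H} {n : ℕ}

theorem infDist_greedySpace_le_greedyError (hF : Bornology.IsBounded F) {x : H} (hx : x ∈ F) :
    infDist x (greedySpace f n : Set H) ≤ greedyError F f n :=
  le_ciSup (bddAbove_range_infDist hF (greedySpace f n).nonempty) (⟨x, hx⟩ : F)

theorem greedyError_antitone (hF : Bornology.IsBounded F) (f : ℕ → H) :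
    Antitone (greedyError F f) := by
  intro m n hmn
  refine Real.iSup_le (fun x => ?_) (Real.iSup_nonneg fun _ => infDist_nonneg)
  refine (infDist_le_infDist_of_subset ?_ (greedySpace f m).nonempty).trans
    (infDist_greedySpace_le_greedyError hF x.2)
  exact Submodule.span_mono (Set.image_mono (Set.Iio_subset_Iio hmn))

theorem kolmogorovWidth_nonneg (F : Set H) (n : ℕ) : 0 ≤ kolmogorovWidth F n := by
  refine Real.sInf_nonneg ?_
  rintro _ ⟨Y, -, -, rfl⟩
  exact Real.iSup_nonneg fun _ => infDist_nonneg

theorem le_kolmogorovWidth {r : ℝ} (h : ∀ Y : Submodule ℝ H, FiniteDimensional ℝ Y →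
    Module.finrank ℝ Y ≤ n → r ≤ ⨆ g : F, infDist (g : H) (Y : Set H)) :
    r ≤ kolmogorovWidth F n := by
  refine le_csInf ⟨_, ⊥, inferInstance, by simp, rfl⟩ ?_
  rintro _ ⟨Y, hYfin, hYn, rfl⟩
  exact h Y hYfin hYn

theorem stmt_6_general (hF : Bornology.IsBounded F) {γ : ℝ} (hγ : 0 < γ)
    (hfF : ∀ m ≤ n, f m ∈ F)
    (hgreedy : ∀ m ≤ n, γ * greedyError F f m ≤ infDist (f m) (greedySpace f m : Set H)) :
    greedyError F f n ≤ ((1 + γ⁻¹) ^ (n + 1) - 1) * kolmogorovWidth F n := by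
  have hK : 0 < (1 + γ⁻¹) ^ (n + 1) - 1 :=
    sub_pos.2 (one_lt_pow₀ (lt_add_of_pos_right 1 (inv_pos.2 hγ)) n.succ_ne_zero)
  rw [← div_le_iff₀' hK]
  refine le_kolmogorovWidth fun Y _ hYn => (div_le_iff₀' hK).2 ?_
  have hpivot : ∀ i ≤ n, ∀ j < i, infDist (f i) (greedySpace f j : Set H) ≤
      γ⁻¹ * infDist (f j) (greedySpace f j : Set H) := fun i hi j hj =>
    (infDist_greedySpace_le_greedyError hF (hfF i hi)).trans
      ((le_inv_mul_iff₀ hγ).2 (hgreedy j (hj.le.trans hi)))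
  have hlower : ∀ i ≤ n, γ * greedyError F f n ≤ infDist (f i) (greedySpace f i : Set H) :=
    fun i hi => le_trans (by gcongr; exact greedyError_antitone hF f hi) (hgreedy i hi)
  have hmain := le_mul_geom_sum_of_le_infDist_span_image_Iio (inv_nonneg.2 hγ.le) hYn
    (fun i hi => le_ciSup (bddAbove_range_infDist hF Y.nonempty) (⟨f i, hfF i hi⟩ : F))
    hpivot hlower
  have hgeom : (∑ i ∈ range (n + 1), (1 + γ⁻¹) ^ i) = γ * ((1 + γ⁻¹) ^ (n + 1) - 1) := by
    rw [← geom_sum_mul, add_sub_cancel_left, mul_comm, inv_mul_cancel_right₀ hγ.ne']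
  rw [hgeom, mul_left_comm] at hmain
  exact (le_of_mul_le_mul_left hmain hγ).trans_eq (mul_comm _ _)

end Greedy

/-- Weak greedy algorithms in a Hilbert space: comparison of the greedy error with
the Kolmogorov width, `σ_n(F) ≤ (1 + γ⁻¹)^{n+1} (n+1) d_n(F)`. -/
theorem stmt_6
    {H : Type*} [NormedAddCommGroup H] [InnerProductSpace ℝ H] [CompleteSpace H]
    (F : Set H) (hFcompact : IsCompact F) (hFne : F.Nonempty)
    (f : ℕ → H) (hfF : ∀ m, f m ∈ F)
    (γ : ℝ) (hγ0 : 0 < γ) (hγ1 : γ ≤ 1)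
    (hgreedy : ∀ n, γ * greedyError F f n ≤ Metric.infDist (f n) (greedySpace f n : Set H)) :
    ∀ n, greedyError F f n
      ≤ (1 + γ⁻¹) ^ (n + 1) * (n + 1) * kolmogorovWidth F n := by
  intro n
  refine (stmt_6_general hFcompact.isBounded hγ0 (fun m _ => hfF m) fun m _ => hgreedy m).trans ?_
  gcongr
  · exact kolmogorovWidth_nonneg F n
  · calc (1 + γ⁻¹) ^ (n + 1) - 1 ≤ (1 + γ⁻¹) ^ (n + 1) := sub_le_self _ zero_le_one
      _ ≤ (1 + γ⁻¹) ^ (n + 1) * (n + 1) :=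
        le_mul_of_one_le_right (by positivity) (le_add_of_nonneg_left n.cast_nonneg)
end
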